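/- arXiv:2503.20657 — 3 statements merged into one kernel-verified Lean document; each statement's English description precedes it below -/
import Mathlib

section
/- Let X be a real inner product space of dimension 2n, J : X → X a linear isometry with J ∘ J = −id, and V ⊆ X a co-isotropic subspace. Then V splits as an internal direct sum V = K_V(V) ⊕ V^ω, i.e. K_V(V) ∩ V^ω = {0} and K_V(V) + V^ω = V, where K_V(V) denotes the image of the map K_V : V → V, K_V(v) = Π_V(J v). -/
/-- The symplectic complement `V^ω = {ξ : ∀ v ∈ V, ω(ξ,v) = 0}` of a subspace `V`
of a real inner product space with compatible complex structure `J`, where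
`ω(u,v) = ⟪u, J v⟫`. -/
def sympComp {X : Type*} [NormedAddCommGroup X] [InnerProductSpace ℝ X]
    (J : X →ₗ[ℝ] X) (V : Submodule ℝ X) : Submodule ℝ X where
  carrier := {ξ : X | ∀ v ∈ V, (inner ℝ ξ (J v) : ℝ) = 0}
  zero_mem' := by intro v hv; simp
  add_mem' := by
    intro a b ha hb v hv
    rw [inner_add_left, ha v hv, hb v hv, add_zero]
  smul_mem' := by
    intro c a ha v hv
    rw [real_inner_smul_left, ha v hv, mul_zero]

/-- The map `K_V = Π_V ∘ J`, viewed as an endomorphism of the ambient space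
(`Π_V` is the orthogonal projection onto `V`). -/
noncomputable def KV {X : Type*} [NormedAddCommGroup X] [InnerProductSpace ℝ X]
    [FiniteDimensional ℝ X] (J : X →ₗ[ℝ] X) (V : Submodule ℝ X) : X →ₗ[ℝ] X :=
  V.subtype ∘ₗ (Submodule.orthogonalProjectionOnto V).toLinearMap ∘ₗ J

/-- **Corollary B.8.** If `X` has dimension `2n` and `V` is a co-isotropic
subspace, then `V` splits as an internal direct sum `V = K_V(V) ⊕ V^ω`:
the image of `K_V = Π_V ∘ J|_V` and `V^ω` intersect trivially and together
span `V`. -/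
theorem coisotropic_splitting {X : Type*} [NormedAddCommGroup X]
    [InnerProductSpace ℝ X] [FiniteDimensional ℝ X] (n : ℕ)
    (hX : Module.finrank ℝ X = 2 * n)
    (J : X →ₗ[ℝ] X) (hJiso : ∀ x, ‖J x‖ = ‖x‖) (hJ2 : ∀ x, J (J x) = -x)
    (V : Submodule ℝ X) (hco : sympComp J V ≤ V) :
    Submodule.map (KV J V) V ⊓ sympComp J V = ⊥ ∧
    Submodule.map (KV J V) V ⊔ sympComp J V = V := by
  have key : ∀ y ∈ V, ∀ v : X, inner ℝ y (KV J V v) = inner ℝ y (J v) := by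
    intro y hy v
    have h := Submodule.sub_starProjection_mem_orthogonal (K := V) (J v)
    have h2 := (Submodule.mem_orthogonal V _).1 h y hy
    rw [inner_sub_right] at h2
    have h3 : KV J V v = V.starProjection (J v) := rfl
    rw [h3]
    linarith
  have hle : Submodule.map (KV J V) V ≤ V := by
    rintro _ ⟨v, _, rfl⟩
    exact Subtype.property (V.orthogonalProjectionOnto (J v))
  constructor
  · rw [eq_bot_iff]
    rintro x ⟨⟨v, hv, rfl⟩, hx⟩
    have h1 := key _ (hco hx) v
    rw [hx v hv] at h1
    simpa using h1
  · apply le_antisymm (sup_le hle hco)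
    intro x hx
    set R := Submodule.map (KV J V) V with hR
    have hp : R.starProjection x ∈ R := R.starProjection_apply_mem x
    have hy := Submodule.sub_starProjection_mem_orthogonal (K := R) x
    refine Submodule.mem_sup.2 ⟨_, hp, x - R.starProjection x, ?_, by abel⟩
    intro v hv
    rw [← key _ (V.sub_mem hx (hle hp)) v]
    exact (Submodule.mem_orthogonal' R _).1 hy _ (Submodule.mem_map_of_mem hv)
end

section
/- Let X be a real inner product space of dimension 2n, J : X → X a linear isometry with J ∘ J = −id, and V ⊆ X a co-isotropic subspace of dimension d. Then the image K_V(V) of the map K_V : V → V, K_V(v) = Π_V(J v), has dimension 2(d − n), and V^ω has dimension 2n − d. -/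
/-- **Dimension count in the co-isotropic case.** If `X` has dimension `2n` and
`V` is a co-isotropic subspace of dimension `d`, then the image of
`K_V = Π_V ∘ J|_V` has dimension `2(d − n)` and `V^ω` has dimension `2n − d`. -/
theorem coisotropic_dimensions {X : Type*} [NormedAddCommGroup X]
    [InnerProductSpace ℝ X] [FiniteDimensional ℝ X] (n d : ℕ)
    (hX : Module.finrank ℝ X = 2 * n)
    (J : X →ₗ[ℝ] X) (hJiso : ∀ x, ‖J x‖ = ‖x‖) (hJ2 : ∀ x, J (J x) = -x)
    (V : Submodule ℝ X) (hV : Module.finrank ℝ V = d)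
    (hco : sympComp J V ≤ V) :
    Module.finrank ℝ (Submodule.map (KV J V) V) = 2 * (d - n) ∧
    Module.finrank ℝ (sympComp J V) = 2 * n - d := by
  have hin : ∀ x y, inner ℝ (J x) (J y) = (inner ℝ x y : ℝ) := fun x y =>
    (LinearIsometry.mk J hJiso).inner_map_map x y
  have hinj : Function.Injective J := (LinearIsometry.mk J hJiso).injective
  have hS : sympComp J V = (V.map J)ᗮ := by
    ext x
    rw [Submodule.mem_orthogonal']
    constructor
    · rintro h _ ⟨v, hv, rfl⟩
      exact h v hv
    · intro h v hv
      exact h _ ⟨v, hv, rfl⟩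
  have hm : Module.finrank ℝ (V.map J) = d := by
    rw [← hV]
    exact (Submodule.equivMapOfInjective J hinj V).finrank_eq.symm
  have h1 := (V.map J).finrank_add_finrank_orthogonal
  rw [← hS, hm, hX] at h1
  have h2 := Submodule.finrank_mono hco
  rw [hV] at h2
  have hker : LinearMap.ker ((KV J V).domRestrict V) = (sympComp J V).comap V.subtype := by
    ext v
    have e : (KV J V).domRestrict V v = 0 ↔ J v ∈ Vᗮ := by
      simp [KV, LinearMap.domRestrict_apply, Submodule.starProjection_apply_eq_zero_iff]
    rw [LinearMap.mem_ker, e, Submodule.mem_orthogonal', Submodule.mem_comap]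
    have e2 : ∀ w, (inner ℝ (J v) w : ℝ) = - inner ℝ (v : X) (J w) := by
      intro w
      rw [← hin (J v) w, hJ2, inner_neg_left]
    constructor
    · intro h w hw
      have := h w hw
      rw [e2] at this
      exact neg_eq_zero.mp this
    · intro h w hw
      rw [e2, neg_eq_zero]
      exact h w hw
  have h3 := LinearMap.finrank_range_add_finrank_ker ((KV J V).domRestrict V)
  rw [hker, (Submodule.comapSubtypeEquivOfLe hco).finrank_eq, LinearMap.range_domRestrict, hV] at h3
  omega
end

section
/- Let X be a finite-dimensional real inner product space, J : X → X a linear isometry with J ∘ J = −id, and V ⊆ X a co-isotropic subspace. Then K_V acts as J on its own image and as zero on V^ω: for every ξ in the image K_V(V) one has Jξ ∈ V and K_V(ξ) = Jξ, while K_V(ξ) = 0 for every ξ ∈ V^ω. Consequently K_V ∘ K_V = −id on K_V(V), so the nonzero eigenvalues of the complexification of K_V are ±i. -/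
/-- **Behavior of `K_V` on the splitting `V = K_V(V) ⊕ V^ω`.** If `V` is a
co-isotropic subspace, then `K_V = Π_V ∘ J|_V` acts as `J` on its own image
(and the image is mapped into `V` by `J`), vanishes on `V^ω`, and satisfies
`K_V ∘ K_V = −id` on its image (so the nonzero eigenvalues of its
complexification are `±i`). -/
theorem KV_acts_as_J_on_image {X : Type*} [NormedAddCommGroup X]
    [InnerProductSpace ℝ X] [FiniteDimensional ℝ X]
    (J : X →ₗ[ℝ] X) (hJiso : ∀ x, ‖J x‖ = ‖x‖) (hJ2 : ∀ x, J (J x) = -x)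
    (V : Submodule ℝ X) (hco : sympComp J V ≤ V) :
    (∀ ξ ∈ Submodule.map (KV J V) V, J ξ ∈ V ∧ KV J V ξ = J ξ) ∧
    (∀ ξ ∈ sympComp J V, KV J V ξ = 0) ∧
    (∀ ξ ∈ Submodule.map (KV J V) V, KV J V (KV J V ξ) = -ξ) := by
  have hin : ∀ x y, (inner ℝ (J x) (J y) : ℝ) = inner ℝ x y :=
    (LinearMap.norm_map_iff_inner_map_map J).1 hJiso
  have hK : ∀ x, KV J V x = (V.orthogonalProjectionOnto (J x) : X) := fun x => rfl
  have hKfix : ∀ x, J x ∈ V → KV J V x = J x := fun x hx => by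
    rw [hK]
    exact congrArg Subtype.val (Submodule.orthogonalProjectionOnto_mem_subspace_eq_self (⟨J x, hx⟩ : V))
  have hKmem : ∀ x, KV J V x ∈ V := fun x => by
    rw [hK]
    exact Subtype.property _
  have h1 : ∀ ξ ∈ Submodule.map (KV J V) V, J ξ ∈ V := by
    rintro _ ⟨v, hv, rfl⟩
    have hperp : J v - KV J V v ∈ Vᗮ := by
      rw [hK]
      exact Submodule.sub_starProjection_mem_orthogonal (J v)
    have hs : J (J v - KV J V v) ∈ sympComp J V := fun w hw => by
      rw [hin]
      exact Submodule.inner_left_of_mem_orthogonal hw hperp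
    have hm := hco hs
    rw [map_sub, hJ2] at hm
    have h := V.neg_mem (V.add_mem hm hv)
    have e : -(-v - J (KV J V v) + v) = J (KV J V v) := by abel
    rwa [e] at h
  refine ⟨fun ξ hξ => ⟨h1 ξ hξ, hKfix ξ (h1 ξ hξ)⟩, fun ξ hξ => ?_, fun ξ hξ => ?_⟩
  · have hperp : J ξ ∈ Vᗮ := by
      rw [Submodule.mem_orthogonal']
      intro v hv
      have h := hξ v hv
      rw [← hin, hJ2, inner_neg_right, neg_eq_zero] at h
      exact h
    rw [hK, Submodule.orthogonalProjectionOnto_apply_of_mem_orthogonal hperp]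
    rfl
  · have hV : ξ ∈ V := by
      obtain ⟨v, _, rfl⟩ := hξ
      exact hKmem v
    rw [hKfix ξ (h1 ξ hξ), hKfix (J ξ) (by rw [hJ2]; exact V.neg_mem hV), hJ2]
end
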